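/- Let N ∈ ℕ and let q, t ∈ ℂ satisfy (q;q)_N ≠ 0 and (t;q)_{N+1} ≠ 0. Then (1−t) F_N(0,t;t) = (1−tq^N) Σ_{n=0}^{N} [N,n]_q (q;q)_n t^{2n} q^{n^2} / ((tq;q)_n)^2. -/

import Mathlib

/-!
The identity is the case `b = t` of a finite Rogers–Fine identity with `a = 0`,
`(1 - t) F_N(0, b; t) = (1 - t q^N) ∑ [N,n] (q;q)_n (b t)^n q^(n^2) / ((bq;q)_n (tq;q)_n)`,
which, unlike its specialization, can be proved by induction on `N`: both sides satisfy a first-order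
recurrence that replaces `(N + 1, b, t)` by `(N, b q, t q)`.

For the sum on the right the recurrence is the shift `n ↦ n + 1` (`fineSum_succ`). For `F` it is
`(1 - t) F_{N+1}(0, b; t) = (1 - t q^(N+1)) + (1 - q^(N+1)) b t q / (1 - b q) * F_N(0, b q; t q)`
(`fineF_succ`). Writing `f_n` for the summands of `F_{N+1}(0, b; t)`, one has
`(1 - b q^(n+1)) (1 - t q^(N-n)) f_{n+1} = t (1 - q^(N+1-n)) f_n`, while the summands of the last
term are `b q^(n+1) (1 - t q^(N-n)) f_{n+1}`; summing over `n` and splitting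
`1 - t = (1 - t q^(N+1-n)) - t (1 - q^(N+1-n))` gives the recurrence.
-/

open Finset

/-- The q-Pochhammer symbol (z; q)_n = prod_{j=0}^{n-1} (1 - z q^j). -/
noncomputable def qPoch (q z : ℂ) (n : ℕ) : ℂ :=
  ∏ j ∈ Finset.range n, (1 - z * q ^ j)

/-- The Gaussian binomial coefficient [N, n]_q = (q;q)_N / ((q;q)_n (q;q)_{N-n}). -/
noncomputable def qBinom (q : ℂ) (N n : ℕ) : ℂ :=
  qPoch q q N / (qPoch q q n * qPoch q q (N - n))

/-- The finite analogue of Fine's function,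
F_N(a, b; t) = sum_{n=0}^{N} [N,n]_q (aq;q)_n (t;q)_{N-n} (q;q)_n t^n / ((bq;q)_n (t;q)_N). -/
noncomputable def fineF (q a b t : ℂ) (N : ℕ) : ℂ :=
  ∑ n ∈ Finset.range (N + 1),
    qBinom q N n * (qPoch q (a * q) n * qPoch q t (N - n) * qPoch q q n * t ^ n) /
      (qPoch q (b * q) n * qPoch q t N)

lemma qPoch_succ (q z : ℂ) (n : ℕ) : qPoch q z (n + 1) = qPoch q z n * (1 - z * q ^ n) := by
  simp [qPoch, Finset.prod_range_succ]

lemma qPoch_succ' (q z : ℂ) (n : ℕ) : qPoch q z (n + 1) = (1 - z) * qPoch q (z * q) n := by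
  simp only [qPoch, Finset.prod_range_succ', pow_zero, mul_one]
  rw [mul_comm]
  congr 1
  refine Finset.prod_congr rfl fun j _ => ?_
  ring

lemma qPoch_zero (q z : ℂ) : qPoch q z 0 = 1 := by simp [qPoch]

lemma qPoch_zero_left (q : ℂ) (n : ℕ) : qPoch q 0 n = 1 := by simp [qPoch]

lemma qPoch_ne_zero_of_le {q z : ℂ} {m n : ℕ} (h : qPoch q z n ≠ 0) (hmn : m ≤ n) :
    qPoch q z m ≠ 0 := by
  rw [qPoch, Finset.prod_ne_zero_iff] at *
  intro j hj
  exact h j (Finset.mem_range.2 (lt_of_lt_of_le (Finset.mem_range.1 hj) hmn))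

/-- The `n`-th summand of `F_N(0, b; t)`, with the factor `(q;q)_n` cancelled. -/
noncomputable def fineTerm (q b t : ℂ) (N n : ℕ) : ℂ :=
  qPoch q q N * qPoch q t (N - n) * t ^ n /
    (qPoch q q (N - n) * qPoch q (b * q) n * qPoch q t N)

/-- The right-hand sum of the finite Rogers–Fine identity with `a = 0`. -/
noncomputable def fineSum (q b t : ℂ) (N : ℕ) : ℂ :=
  ∑ n ∈ Finset.range (N + 1),
    qPoch q q N * ((b * t) ^ n * q ^ (n ^ 2)) /
      (qPoch q q (N - n) * (qPoch q (b * q) n * qPoch q (t * q) n))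

lemma qBinom_mul_qPoch {q : ℂ} {N n : ℕ} (hq : qPoch q q N ≠ 0) (hn : n ≤ N) :
    qBinom q N n * qPoch q q n = qPoch q q N / qPoch q q (N - n) := by
  have h1 := qPoch_ne_zero_of_le hq hn
  have h2 := qPoch_ne_zero_of_le hq (Nat.sub_le N n)
  rw [qBinom]
  field_simp

lemma fineF_eq_sum {q : ℂ} (b t : ℂ) {N : ℕ} (hq : qPoch q q N ≠ 0) :
    fineF q 0 b t N = ∑ n ∈ Finset.range (N + 1), fineTerm q b t N n := by
  refine Finset.sum_congr rfl fun n hn => ?_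
  have h := qBinom_mul_qPoch hq (Nat.lt_succ_iff.1 (Finset.mem_range.1 hn))
  rw [zero_mul, qPoch_zero_left, one_mul,
    show qBinom q N n * (qPoch q t (N - n) * qPoch q q n * t ^ n) =
      (qBinom q N n * qPoch q q n) * (qPoch q t (N - n) * t ^ n) by ring, h, fineTerm]
  simp only [div_eq_mul_inv, mul_inv]
  ring

lemma fineTerm_ratio {q b t : ℂ} {n m : ℕ} (hq : qPoch q q (n + m + 1) ≠ 0)
    (hb : qPoch q (b * q) (n + m + 1) ≠ 0) :
    (1 - b * q ^ (n + 1)) * (1 - t * q ^ m) * fineTerm q b t (n + m + 1) (n + 1) =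
      t * (1 - q ^ (m + 1)) * fineTerm q b t (n + m + 1) n := by
  have e1 : n + m + 1 - (n + 1) = m := by omega
  have e2 : n + m + 1 - n = m + 1 := by omega
  have h1 := qPoch_ne_zero_of_le hq (show m + 1 ≤ n + m + 1 by omega)
  have h2 := qPoch_ne_zero_of_le hb (show n + 1 ≤ n + m + 1 by omega)
  rw [fineTerm, fineTerm, e1, e2]
  rw [qPoch_succ] at h1 h2
  rw [qPoch_succ q q m, qPoch_succ q (b * q) n, qPoch_succ q t m]
  generalize qPoch q t (n + m + 1) = T
  have h3 := left_ne_zero_of_mul h1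
  have h4 := right_ne_zero_of_mul h1
  have h5 := left_ne_zero_of_mul h2
  have h6 := right_ne_zero_of_mul h2
  by_cases hT : T = 0
  · simp [hT]
  rw [show q ^ (m + 1) = q * q ^ m by ring, show b * q ^ (n + 1) = b * q * q ^ n by ring]
  field_simp
  ring

lemma fineTerm_shift {q b t : ℂ} {n m : ℕ} (hq : qPoch q q (n + m + 1) ≠ 0)
    (hb : qPoch q (b * q) (n + m + 1) ≠ 0) (ht : qPoch q t (n + m + 1) ≠ 0) :
    (1 - q ^ (n + m + 1)) * (b * t * q) / (1 - b * q) * fineTerm q (b * q) (t * q) (n + m) n =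
      b * q ^ (n + 1) * (1 - t * q ^ m) * fineTerm q b t (n + m + 1) (n + 1) := by
  have e1 : n + m + 1 - (n + 1) = m := by omega
  have e2 : n + m - n = m := by omega
  have h1 := qPoch_ne_zero_of_le hq (show m ≤ n + m + 1 by omega)
  have h2 := qPoch_ne_zero_of_le hb (show n + 1 ≤ n + m + 1 by omega)
  rw [qPoch_succ'] at h2 ht
  have h3 := left_ne_zero_of_mul h2
  have h4 := right_ne_zero_of_mul h2
  have h5 := left_ne_zero_of_mul ht
  have h6 := right_ne_zero_of_mul ht
  -- the two expansions of `(t;q)_{m+1}`, from the top and from the bottom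
  have key : (1 - t) * qPoch q (t * q) m = qPoch q t m * (1 - t * q ^ m) := by
    rw [← qPoch_succ', qPoch_succ]
  rw [fineTerm, fineTerm, e1, e2, qPoch_succ' q (b * q) n, qPoch_succ' q t (n + m),
    qPoch_succ q q (n + m), show q ^ (n + m + 1) = q * q ^ (n + m) by ring]
  generalize qPoch q (t * q) m = A at *
  generalize q ^ (n + m) = Q
  have hA : A = qPoch q t m * (1 - t * q ^ m) / (1 - t) := by
    rw [← key]; field_simp
  rw [hA]
  field_simp
  ring

lemma fineF_succ {q b t : ℂ} {N : ℕ} (hq : qPoch q q (N + 1) ≠ 0)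
    (hb : qPoch q (b * q) (N + 1) ≠ 0) (ht : qPoch q t (N + 1) ≠ 0) :
    (1 - t) * fineF q 0 b t (N + 1) = (1 - t * q ^ (N + 1)) +
      (1 - q ^ (N + 1)) * (b * t * q) / (1 - b * q) * fineF q 0 (b * q) (t * q) N := by
  rw [fineF_eq_sum b t hq, fineF_eq_sum _ _ (qPoch_ne_zero_of_le hq (Nat.le_succ N))]
  have split : (1 - t) * ∑ n ∈ Finset.range (N + 1 + 1), fineTerm q b t (N + 1) n =
      (∑ n ∈ Finset.range (N + 1 + 1), (1 - t * q ^ (N + 1 - n)) * fineTerm q b t (N + 1) n) -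
      ∑ n ∈ Finset.range (N + 1 + 1),
        t * (1 - q ^ (N + 1 - n)) * fineTerm q b t (N + 1) n := by
    rw [Finset.mul_sum, ← Finset.sum_sub_distrib]
    refine Finset.sum_congr rfl fun n _ => ?_
    ring
  have f0 : fineTerm q b t (N + 1) 0 = 1 := by
    simp only [fineTerm, Nat.sub_zero, pow_zero, qPoch_zero, mul_one]
    field_simp
  rw [split, Finset.sum_range_succ', Finset.sum_range_succ (fun n =>
    t * (1 - q ^ (N + 1 - n)) * fineTerm q b t (N + 1) n), f0, Nat.sub_self, Nat.sub_zero,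
    Finset.mul_sum]
  have main : ∀ n ∈ Finset.range (N + 1),
      (1 - q ^ (N + 1)) * (b * t * q) / (1 - b * q) * fineTerm q (b * q) (t * q) N n =
      (1 - t * q ^ (N + 1 - (n + 1))) * fineTerm q b t (N + 1) (n + 1) -
        t * (1 - q ^ (N + 1 - n)) * fineTerm q b t (N + 1) n := by
    intro n hn
    obtain ⟨m, rfl⟩ := Nat.exists_eq_add_of_le (Nat.lt_succ_iff.1 (Finset.mem_range.1 hn))
    rw [fineTerm_shift hq hb ht, show n + m + 1 - (n + 1) = m by omega,
      show n + m + 1 - n = m + 1 by omega, ← fineTerm_ratio hq hb]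
    ring
  rw [Finset.sum_congr rfl main, Finset.sum_sub_distrib]
  ring

lemma fineSum_succ {q b t : ℂ} {N : ℕ} (hq : qPoch q q (N + 1) ≠ 0) :
    fineSum q b t (N + 1) = 1 + (1 - q ^ (N + 1)) * (b * t * q) / ((1 - b * q) * (1 - t * q)) *
      fineSum q (b * q) (t * q) N := by
  rw [fineSum, Finset.sum_range_succ', fineSum, Finset.mul_sum, add_comm]
  congr 1
  · simp [qPoch_zero, hq]
  · refine Finset.sum_congr rfl fun n _ => ?_
    rw [Nat.add_sub_add_right, qPoch_succ' q (b * q) n, qPoch_succ' q (t * q) n,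
      qPoch_succ q q N]
    simp only [div_eq_mul_inv, mul_inv]
    ring

/-- The finite Rogers–Fine identity for `a = 0`, with `b` and `t` independent. -/
lemma fineF_zero_eq_fineSum (N : ℕ) : ∀ (q b t : ℂ), qPoch q q N ≠ 0 → qPoch q (b * q) N ≠ 0 →
    qPoch q t (N + 1) ≠ 0 →
    (1 - t) * fineF q 0 b t N = (1 - t * q ^ N) * fineSum q b t N := by
  induction N with
  | zero => intro q b t _ _ _; simp [fineF, fineSum, qBinom, qPoch_zero]
  | succ N ih =>
    intro q b t hq hb ht
    rw [fineF_succ hq hb (qPoch_ne_zero_of_le ht (Nat.le_succ _)), fineSum_succ hq]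
    rw [qPoch_succ'] at hb ht
    have ht' := right_ne_zero_of_mul ht
    have h := ih q (b * q) (t * q) (qPoch_ne_zero_of_le hq (Nat.le_succ N))
      (right_ne_zero_of_mul hb) ht'
    have hb1 := left_ne_zero_of_mul hb
    rw [qPoch_succ'] at ht'
    have ht1 := left_ne_zero_of_mul ht'
    have h' : fineF q 0 (b * q) (t * q) N =
        (1 - t * q ^ (N + 1)) * fineSum q (b * q) (t * q) N / (1 - t * q) := by
      rw [eq_div_iff ht1, mul_comm, h]
      ring
    rw [h']
    simp only [div_eq_mul_inv, mul_inv]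
    ring

theorem fineF_zero_t_t (N : ℕ) (q t : ℂ)
    (hq : qPoch q q N ≠ 0) (ht : qPoch q t (N + 1) ≠ 0) :
    (1 - t) * fineF q 0 t t N =
      (1 - t * q ^ N) *
        ∑ n ∈ Finset.range (N + 1),
          qBinom q N n * (qPoch q q n * t ^ (2 * n) * q ^ (n ^ 2)) /
            (qPoch q (t * q) n) ^ 2 := by
  have hb : qPoch q (t * q) N ≠ 0 := by
    have h := ht
    rw [qPoch_succ'] at h
    exact right_ne_zero_of_mul h
  rw [fineF_zero_eq_fineSum N q t t hq hb ht, fineSum]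
  congr 1
  refine Finset.sum_congr rfl fun n hn => ?_
  have h := qBinom_mul_qPoch hq (Nat.lt_succ_iff.1 (Finset.mem_range.1 hn))
  rw [show qBinom q N n * (qPoch q q n * t ^ (2 * n) * q ^ (n ^ 2)) =
    (qBinom q N n * qPoch q q n) * (t ^ (2 * n) * q ^ (n ^ 2)) by ring, h]
  simp only [div_eq_mul_inv, mul_inv]
  ring
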